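/- Let X and Z be real random variables defined on a common probability space with P(Z > 0) = 1, and let N have the standard Gaussian law N(0,1). Then for every ε > 0, d_Kol(X/Z, N) ≤ d_Kol(X, N) + P(|Z − 1| > ε) + ε. -/

import Mathlib

open MeasureTheory ProbabilityTheory Real Filter Finset
open scoped Topology ENNReal NNReal

noncomputable section

/-- Kolmogorov distance between two Borel measures on `ℝ`. -/
def dKol (μ ν : Measure ℝ) : ℝ :=
  ⨆ z : ℝ, |(μ (Set.Iic z)).toReal - (ν (Set.Iic z)).toReal|

/-- `X 0, X 1 : ℝ → Ω → ℝ` is a pair of independent centered Gaussian processes,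
started at `0`, with almost surely continuous paths on `[0,∞)` and the
Ornstein–Uhlenbeck covariance `E[Xᵢ(s)Xᵢ(t)] = (e^{−θ|t−s|} − e^{−θ(t+s)})/(2θ)`. -/
structure IsOUPair {Ω : Type} [MeasureSpace Ω] (θ : ℝ) (X : Fin 2 → ℝ → Ω → ℝ) : Prop where
  meas : ∀ i t, Measurable (X i t)
  gaussian : ∀ (i : Fin 2) (n : ℕ) (t : Fin n → ℝ) (c : Fin n → ℝ), (∀ j, 0 ≤ t j) →
      ∃ v : NNReal, Measure.map (fun ω => ∑ j, c j * X i (t j) ω) ℙ = gaussianReal 0 v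
  indep : IndepFun (fun ω t => X 0 t ω) (fun ω t => X 1 t ω) ℙ
  cont : ∀ᵐ ω ∂(ℙ : Measure Ω), ∀ i, ContinuousOn (fun t => X i t ω) (Set.Ici 0)
  init : ∀ i ω, X i 0 ω = 0
  cov : ∀ (i : Fin 2) (s t : ℝ), 0 ≤ s → 0 ≤ t →
      ∫ ω, X i s ω * X i t ω ∂ℙ
        = (Real.exp (-θ * |t - s|) - Real.exp (-θ * (t + s))) / (2 * θ)

variable {Ω : Type} [MeasureSpace Ω]

/-- `F_T := T^{-1/2} ∫₀^T X₁(u) X₂(u) du`. -/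
def ouF (X : Fin 2 → ℝ → Ω → ℝ) (T : ℝ) (ω : Ω) : ℝ :=
  (1 / Real.sqrt T) * ∫ u in (0:ℝ)..T, X 0 u ω * X 1 u ω

/-- `X̄ᵢ(T) := T^{-1} ∫₀^T Xᵢ(u) du`. -/
def ouXbar (X : Fin 2 → ℝ → Ω → ℝ) (i : Fin 2) (T : ℝ) (ω : Ω) : ℝ :=
  (1 / T) * ∫ u in (0:ℝ)..T, X i u ω

/-- `Y_{ij}(T) := ∫₀^T Xᵢ(u)Xⱼ(u) du − T·X̄ᵢ(T)·X̄ⱼ(T)`. -/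
def ouY (X : Fin 2 → ℝ → Ω → ℝ) (i j : Fin 2) (T : ℝ) (ω : Ω) : ℝ :=
  (∫ u in (0:ℝ)..T, X i u ω * X j u ω) - T * ouXbar X i T ω * ouXbar X j T ω

/-- Yule's nonsense correlation `ρ(T)`. -/
def ouRho (X : Fin 2 → ℝ → Ω → ℝ) (T : ℝ) (ω : Ω) : ℝ :=
  ouY X 0 1 T ω / Real.sqrt (ouY X 0 0 T ω * ouY X 1 1 T ω)

/-- `A(n) := (√Tₙ/n) Σ_{k<n} X₁(kΔ)X₂(kΔ)` with `Tₙ = nΔ`. -/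
def ouA (X : Fin 2 → ℝ → Ω → ℝ) (n : ℕ) (Δ : ℝ) (ω : Ω) : ℝ :=
  (Real.sqrt (n * Δ) / n) * ∑ k ∈ Finset.range n, X 0 (k * Δ) ω * X 1 (k * Δ) ω

/-- `X̃ᵢ(n) := n^{-1} Σ_{k<n} Xᵢ(kΔ)`. -/
def ouXtilde (X : Fin 2 → ℝ → Ω → ℝ) (i : Fin 2) (n : ℕ) (Δ : ℝ) (ω : Ω) : ℝ :=
  (1 / n) * ∑ k ∈ Finset.range n, X i (k * Δ) ω

/-- `Ỹ_{ij}(n) := Δ Σ_{k<n} Xᵢ(kΔ)Xⱼ(kΔ) − Tₙ·X̃ᵢ(n)·X̃ⱼ(n)` with `Tₙ = nΔ`. -/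
def ouYtilde (X : Fin 2 → ℝ → Ω → ℝ) (i j : Fin 2) (n : ℕ) (Δ : ℝ) (ω : Ω) : ℝ :=
  Δ * ∑ k ∈ Finset.range n, X i (k * Δ) ω * X j (k * Δ) ω
    - (n * Δ) * ouXtilde X i n Δ ω * ouXtilde X j n Δ ω

/-- Yule's discrete nonsense correlation `ρ̃(n)`. -/
def ouRhoTilde (X : Fin 2 → ℝ → Ω → ℝ) (n : ℕ) (Δ : ℝ) (ω : Ω) : ℝ :=
  ouYtilde X 0 1 n Δ ω / Real.sqrt (ouYtilde X 0 0 n Δ ω * ouYtilde X 1 1 n Δ ω)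

/-!
For `ε ≥ 1` the right-hand side is at least `1`. For `ε < 1`, on the event `|Z - 1| ≤ ε` the
denominator is positive and `X / Z ≤ z` differs from `X ≤ z` only by moving the threshold by at most
`ε|z|`. This costs at most `ε` under the Gaussian law because its distribution function `F` is
concave on `[0, ∞)` and convex on `(-∞, 0]`: interpolating between `z` and the mode `0` gives
`|F (c z) - F z| ≤ (1 - c) |F z - F 0| ≤ 1 - c` for `0 ≤ c ≤ 1`. Only this unimodality enters, so
the Gaussian may be replaced by any law that is unimodal about `0`.
-/

section KolmogorovDistance

variable {μ ν : Measure ℝ}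

lemma dKol_nonneg : 0 ≤ dKol μ ν :=
  Real.iSup_nonneg fun _ ↦ abs_nonneg _

lemma abs_cdf_sub_cdf_le_one (x y : ℝ) : |cdf μ x - cdf ν y| ≤ 1 :=
  abs_sub_le_of_nonneg_of_le (cdf_nonneg μ x) (cdf_le_one μ x) (cdf_nonneg ν y) (cdf_le_one ν y)

variable [IsProbabilityMeasure μ] [IsProbabilityMeasure ν]

lemma dKol_eq_iSup_abs_cdf_sub : dKol μ ν = ⨆ z, |cdf μ z - cdf ν z| := by
  simp only [dKol, cdf_eq_real, measureReal_def]

lemma dKol_le {r : ℝ} (h : ∀ z, |cdf μ z - cdf ν z| ≤ r) : dKol μ ν ≤ r :=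
  dKol_eq_iSup_abs_cdf_sub.trans_le (ciSup_le h)

lemma dKol_le_one : dKol μ ν ≤ 1 :=
  dKol_le fun z ↦ abs_cdf_sub_cdf_le_one z z

lemma abs_cdf_sub_cdf_le_dKol (z : ℝ) : |cdf μ z - cdf ν z| ≤ dKol μ ν := by
  rw [dKol_eq_iSup_abs_cdf_sub]
  exact le_ciSup (f := fun z ↦ |cdf μ z - cdf ν z|)
    ⟨1, Set.forall_mem_range.2 fun z ↦ abs_cdf_sub_cdf_le_one z z⟩ z

end KolmogorovDistance

section Unimodal

/-- Unimodality of a law on the line in Khinchin's sense, with mode `m`: the distribution function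
is convex to the left of `m` and concave to the right. Convexity on the closed half-line `Iic m`
still allows an atom at `m`, since a convex function may jump up at the right endpoint. -/
structure IsUnimodal (ν : Measure ℝ) (m : ℝ) : Prop where
  convexOn_Iic : ConvexOn ℝ (Set.Iic m) (cdf ν)
  concaveOn_Ici : ConcaveOn ℝ (Set.Ici m) (cdf ν)

namespace IsUnimodal

variable {ν : Measure ℝ}

lemma of_hasDerivAt {f : ℝ → ℝ} {m : ℝ} (hf : ∀ x, HasDerivAt (cdf ν) (f x) x)
    (hmono : MonotoneOn f (Set.Iic m)) (hanti : AntitoneOn f (Set.Ici m)) : IsUnimodal ν m := by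
  have hderiv : deriv (cdf ν) = f := funext fun x ↦ (hf x).deriv
  have hdiff : Differentiable ℝ (cdf ν) := fun x ↦ (hf x).differentiableAt
  constructor
  · refine MonotoneOn.convexOn_of_deriv (convex_Iic m) hdiff.continuous.continuousOn
      hdiff.differentiableOn ?_
    exact hderiv ▸ hmono.mono interior_subset
  · refine AntitoneOn.concaveOn_of_deriv (convex_Ici m) hdiff.continuous.continuousOn
      hdiff.differentiableOn ?_
    exact hderiv ▸ hanti.mono interior_subset

lemma abs_cdf_mul_sub_cdf_le_of_le_one (hν : IsUnimodal ν 0) {c : ℝ} (hc₀ : 0 ≤ c) (hc₁ : c ≤ 1)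
    (z : ℝ) : |cdf ν (c * z) - cdf ν z| ≤ 1 - c := by
  have hF : |cdf ν z - cdf ν 0| ≤ 1 := abs_cdf_sub_cdf_le_one z 0
  have hc : 0 ≤ 1 - c := sub_nonneg.2 hc₁
  rcases le_total 0 z with hz | hz
  · have hmono : cdf ν (c * z) ≤ cdf ν z :=
      monotone_cdf ν (mul_le_of_le_one_left hz hc₁)
    have hconc : c * cdf ν z + (1 - c) * cdf ν 0 ≤ cdf ν (c * z) := by
      simpa using hν.concaveOn_Ici.2 hz Set.self_mem_Ici hc₀ hc (add_sub_cancel c 1)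
    rw [abs_sub_comm, abs_of_nonneg (sub_nonneg.2 hmono)]
    calc cdf ν z - cdf ν (c * z) ≤ (1 - c) * (cdf ν z - cdf ν 0) := by linarith
      _ ≤ 1 - c := mul_le_of_le_one_right hc (abs_le.1 hF).2
  · have hmono : cdf ν z ≤ cdf ν (c * z) :=
      monotone_cdf ν (le_mul_of_le_one_left hz hc₁)
    have hconv : cdf ν (c * z) ≤ c * cdf ν z + (1 - c) * cdf ν 0 := by
      simpa using hν.convexOn_Iic.2 hz Set.self_mem_Iic hc₀ hc (add_sub_cancel c 1)
    rw [abs_of_nonneg (sub_nonneg.2 hmono)]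
    calc cdf ν (c * z) - cdf ν z ≤ (1 - c) * (cdf ν 0 - cdf ν z) := by linarith
      _ ≤ 1 - c := mul_le_of_le_one_right hc (abs_le.1 (abs_sub_comm (cdf ν z) _ ▸ hF)).2

lemma abs_cdf_mul_sub_cdf_le (hν : IsUnimodal ν 0) (c z : ℝ) :
    |cdf ν (c * z) - cdf ν z| ≤ |c - 1| := by
  rcases lt_or_ge c 0 with hc₀ | hc₀
  · calc |cdf ν (c * z) - cdf ν z| ≤ 1 := abs_cdf_sub_cdf_le_one _ _
      _ ≤ |c - 1| := by rw [abs_of_neg (by linarith)]; linarith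
  rcases le_total c 1 with hc₁ | hc₁
  · rw [abs_sub_comm c, abs_of_nonneg (sub_nonneg.2 hc₁)]
    exact hν.abs_cdf_mul_sub_cdf_le_of_le_one hc₀ hc₁ z
  · have hc : 0 < c := zero_lt_one.trans_le hc₁
    have h := hν.abs_cdf_mul_sub_cdf_le_of_le_one (inv_nonneg.2 hc₀) (inv_le_one_of_one_le₀ hc₁)
      (c * z)
    rw [inv_mul_cancel_left₀ hc.ne', abs_sub_comm] at h
    calc |cdf ν (c * z) - cdf ν z| ≤ 1 - c⁻¹ := h
      _ = (c - 1) / c := by field_simp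
      _ ≤ c - 1 := div_le_self (sub_nonneg.2 hc₁) hc₁
      _ ≤ |c - 1| := le_abs_self _

lemma abs_cdf_sub_cdf_le (hν : IsUnimodal ν 0) {w z ε : ℝ} (h : |w - z| ≤ ε * |z|)
    (hε : 0 ≤ ε) : |cdf ν w - cdf ν z| ≤ ε := by
  rcases eq_or_ne z 0 with rfl | hz
  · obtain rfl : w = 0 := by simpa using h
    simpa using hε
  · calc |cdf ν w - cdf ν z| ≤ |w / z - 1| := by
          simpa only [div_mul_cancel₀ w hz] using hν.abs_cdf_mul_sub_cdf_le (w / z) z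
      _ = |w - z| / |z| := by rw [← abs_div, sub_div, div_self hz]
      _ ≤ ε := (div_le_iff₀ (abs_pos.2 hz)).2 h

end IsUnimodal

end Unimodal

section Gaussian

lemma hasDerivAt_integral_Iic {E : Type*} [NormedAddCommGroup E] [NormedSpace ℝ E]
    [CompleteSpace E] {f : ℝ → E} {x : ℝ} (hf : Integrable f) (hx : ContinuousAt f x) :
    HasDerivAt (fun b ↦ ∫ t in Set.Iic b, f t) (f x) x := by
  have hsplit (b : ℝ) :
      ∫ t in Set.Iic b, f t = (∫ t in Set.Iic x, f t) + ∫ t in x..b, f t := by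
    rw [← intervalIntegral.integral_Iic_sub_Iic hf.integrableOn hf.integrableOn,
      add_sub_cancel]
  rw [funext hsplit]
  exact (intervalIntegral.integral_hasDerivAt_right hf.intervalIntegrable
    hf.aestronglyMeasurable.stronglyMeasurableAtFilter hx).const_add _

variable {m : ℝ} {v : ℝ≥0}

lemma continuous_gaussianPDFReal : Continuous (gaussianPDFReal m v) := by
  rw [gaussianPDFReal_def]
  fun_prop

lemma gaussianPDFReal_le_of_abs_sub_le {x y : ℝ} (h : |y - m| ≤ |x - m|) :
    gaussianPDFReal m v x ≤ gaussianPDFReal m v y := by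
  have hsq : (y - m) ^ 2 ≤ (x - m) ^ 2 := sq_le_sq.2 h
  simp only [gaussianPDFReal]
  gcongr

lemma hasDerivAt_cdf_gaussianReal (hv : v ≠ 0) (x : ℝ) :
    HasDerivAt (cdf (gaussianReal m v)) (gaussianPDFReal m v x) x := by
  have hcdf : ⇑(cdf (gaussianReal m v)) = fun b ↦ ∫ t in Set.Iic b, gaussianPDFReal m v t := by
    ext b
    rw [cdf_eq_real, measureReal_def, gaussianReal_apply_eq_integral m hv, ENNReal.toReal_ofReal]
    exact integral_nonneg (gaussianPDFReal_nonneg m v)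
  rw [hcdf]
  exact hasDerivAt_integral_Iic (integrable_gaussianPDFReal m v)
    continuous_gaussianPDFReal.continuousAt

lemma isUnimodal_gaussianReal (hv : v ≠ 0) : IsUnimodal (gaussianReal m v) m := by
  refine .of_hasDerivAt (hasDerivAt_cdf_gaussianReal hv) ?_ ?_
  · intro x hx y hy hxy
    apply gaussianPDFReal_le_of_abs_sub_le
    rw [abs_of_nonpos (sub_nonpos.2 hy), abs_of_nonpos (sub_nonpos.2 hx)]
    linarith
  · intro x hx y hy hxy
    apply gaussianPDFReal_le_of_abs_sub_le
    rw [abs_of_nonneg (sub_nonneg.2 hx), abs_of_nonneg (sub_nonneg.2 hy)]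
    linarith

end Gaussian

section Ratio

section Threshold

variable {x y z ε : ℝ}

lemma abs_mul_sub_self_le (hy : |y - 1| ≤ ε) : |z * y - z| ≤ ε * |z| := by
  calc |z * y - z| = |y - 1| * |z| := by rw [← abs_mul]; ring_nf
    _ ≤ ε * |z| := by gcongr

lemma pos_of_abs_sub_one_le (hε : ε < 1) (hy : |y - 1| ≤ ε) : 0 < y := by
  linarith [(abs_le.1 hy).1]

lemma le_add_of_div_le (hε : ε < 1) (hy : |y - 1| ≤ ε) (h : x / y ≤ z) : x ≤ z + ε * |z| := by
  have hxy : x ≤ z * y := (div_le_iff₀ (pos_of_abs_sub_one_le hε hy)).1 h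
  linarith [(abs_le.1 (abs_mul_sub_self_le (z := z) hy)).2]

lemma div_le_of_le_sub (hε : ε < 1) (hy : |y - 1| ≤ ε) (h : x ≤ z - ε * |z|) : x / y ≤ z := by
  rw [div_le_iff₀ (pos_of_abs_sub_one_le hε hy)]
  linarith [(abs_le.1 (abs_mul_sub_self_le (z := z) hy)).1]

end Threshold

variable {Ω' : Type*} [MeasurableSpace Ω'] {μ : Measure Ω'} [IsProbabilityMeasure μ]

lemma cdf_map_le_cdf_map_add {X Y : Ω' → ℝ} (hX : AEMeasurable X μ) (hY : AEMeasurable Y μ)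
    {a b : ℝ} {s : Set Ω'} (h : ∀ ω ∉ s, X ω ≤ a → Y ω ≤ b) :
    cdf (μ.map X) a ≤ cdf (μ.map Y) b + μ.real s := by
  have := Measure.isProbabilityMeasure_map hX
  have := Measure.isProbabilityMeasure_map hY
  rw [cdf_eq_real, cdf_eq_real, map_measureReal_apply_of_aemeasurable hX measurableSet_Iic,
    map_measureReal_apply_of_aemeasurable hY measurableSet_Iic]
  have hsub : X ⁻¹' Set.Iic a ⊆ Y ⁻¹' Set.Iic b ∪ s := fun ω hω ↦
    or_iff_not_imp_right.2 fun hs ↦ h ω hs hω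
  exact (measureReal_mono hsub).trans (measureReal_union_le _ _)

theorem stmt_3_general {ν : Measure ℝ} [IsProbabilityMeasure ν] (hν : IsUnimodal ν 0)
    {X Z : Ω' → ℝ} (hX : AEMeasurable X μ) (hZ : AEMeasurable Z μ) {ε : ℝ} (hε : 0 ≤ ε) :
    dKol (μ.map fun ω ↦ X ω / Z ω) ν ≤ dKol (μ.map X) ν + μ.real {ω | ε < |Z ω - 1|} + ε := by
  have hXZ : AEMeasurable (fun ω ↦ X ω / Z ω) μ := hX.div hZ
  have := Measure.isProbabilityMeasure_map hX
  have := Measure.isProbabilityMeasure_map hXZ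
  rcases le_or_gt 1 ε with hε₁ | hε₁
  · linarith [dKol_le_one (μ := μ.map fun ω ↦ X ω / Z ω) (ν := ν),
      dKol_nonneg (μ := μ.map X) (ν := ν), measureReal_nonneg (μ := μ) (s := {ω | ε < |Z ω - 1|})]
  refine dKol_le fun z ↦ abs_le.2 ?_
  have hupper : cdf (μ.map fun ω ↦ X ω / Z ω) z
      ≤ cdf (μ.map X) (z + ε * |z|) + μ.real {ω | ε < |Z ω - 1|} :=
    cdf_map_le_cdf_map_add hXZ hX fun ω hω ↦ le_add_of_div_le hε₁ (not_lt.1 hω)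
  have hlower : cdf (μ.map X) (z - ε * |z|)
      ≤ cdf (μ.map fun ω ↦ X ω / Z ω) z + μ.real {ω | ε < |Z ω - 1|} :=
    cdf_map_le_cdf_map_add hX hXZ fun ω hω ↦ div_le_of_le_sub hε₁ (not_lt.1 hω)
  have hν_upper := hν.abs_cdf_sub_cdf_le (w := z + ε * |z|) (z := z)
    (by simp [abs_mul, abs_of_nonneg hε]) hε
  have hν_lower := hν.abs_cdf_sub_cdf_le (w := z - ε * |z|) (z := z)
    (by simp [abs_mul, abs_of_nonneg hε]) hε
  have hd_upper := abs_cdf_sub_cdf_le_dKol (μ := μ.map X) (ν := ν) (z + ε * |z|)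
  have hd_lower := abs_cdf_sub_cdf_le_dKol (μ := μ.map X) (ν := ν) (z - ε * |z|)
  rw [abs_le] at hν_upper hν_lower hd_upper hd_lower
  constructor <;> linarith

end Ratio

/-- Michel–Pfanzagl, ratio form: if `P(Z > 0) = 1` then
`d_Kol(X/Z, N(0,1)) ≤ d_Kol(X, N(0,1)) + P(|Z−1| > ε) + ε` for every `ε > 0`. -/
theorem stmt_3 {Ω' : Type} [MeasureSpace Ω'] [IsProbabilityMeasure (ℙ : Measure Ω')]
    (X Z : Ω' → ℝ) (hX : Measurable X) (hZ : Measurable Z)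
    (hZpos : (ℙ {ω | 0 < Z ω}) = 1) (ε : ℝ) (hε : 0 < ε) :
    dKol (Measure.map (fun ω => X ω / Z ω) ℙ) (gaussianReal 0 1)
      ≤ dKol (Measure.map X ℙ) (gaussianReal 0 1)
        + (ℙ {ω | ε < |Z ω - 1|}).toReal + ε :=
  stmt_3_general (isUnimodal_gaussianReal one_ne_zero) hX.aemeasurable hZ.aemeasurable hε.le

end
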